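/- For every r ≥ 1, all î, ĵ ∈ {3, …, n+2} and all f_1, …, f_{r−1} ∈ {1, …, n+4}, the following identities hold on ℝ^{n+4}: R^î_{ĵ, n+3, n+4; f_1; …; f_{r−1}; n+3} = ∂_{n+3} R^î_{ĵ, n+3, n+4; f_1; …; f_{r−1}} and R^î_{ĵ, n+3, n+4; f_1; …; f_{r−1}; n+4} = Σ_{l̂=3}^{n+2} ( Γ^î_{n+4, l̂} R^l̂_{ĵ, n+3, n+4; f_1; …; f_{r−1}} − Γ^l̂_{n+4, ĵ} R^î_{l̂, n+3, n+4; f_1; …; f_{r−1}} ). -/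

import Mathlib

/-!
Write `p` for the indices `1, 2`, `q` for the indices `n+3, n+4`, `t` for the coordinate
`x^{n+3}`, and `T` for any iterated covariant derivative of the curvature. Only three facts about
the Christoffel symbols matter:

* `Γ^a_{bp} = 0` (`Γchr_p`), that is, the fields `∂_1, ∂_2` are parallel;
* `Γ^q_{bc} = 0` (`Γchr_q`), that is, the dual one-forms `dx^{n+3}, dx^{n+4}` are parallel;
* `Γ^î_{fĵ}` is a function of `t` alone, and vanishes unless `f = n+4`
  (`Γchr_hat`, `Γchr_hat_of_ne`).

The first two give, by induction, `T^q_{…} = 0` (`covRAux_q`) and `T^a_{p…} = 0` (`covRAux_p`).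
By a simultaneous induction (`covRAux_block`) each component `T^î_{ĵ,c,d;f_1;…}` is a function of
`t` alone and vanishes unless `c, d, f_1, …` are all of type `q`. Hence in the recursion for
`T^î_{ĵ,c,d;…;f}` every correction of a lower index `c, d, f_s` has the form `Γ^l_{f·} T_{…l…}`
and is zero: for `l` of type `q` because of `Γ`, otherwise because of `T`. What remains is
`covRAux_cons_block`,
`T^î_{ĵ…;f} = ∂_f T^î_{ĵ…} + Σ_l̂ (Γ^î_{f l̂} T^l̂_{ĵ…} − Γ^l̂_{fĵ} T^î_{l̂…})`,
where for `f = n+3` the sum is zero and for `f = n+4` the derivative is zero.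

No differentiability of the components is needed: for a function `g` of `t` alone, the function
`∂_f g` is again a function of `t` alone, and it vanishes for `f ≠ n+3`, also when `fderiv` takes
its default value `0`.
-/

namespace HolPaper

open Matrix

/-- Points of `ℝ^{n+4}`, with coordinates indexed by `Fin (n+4)`.
The paper's index `1` is `p1`, `2` is `p2`, `î ∈ {3,…,n+2}` is `ehat i` for `i : Fin n`,
`n+3` is `q1` and `n+4` is `q2`. -/
abbrev Pt (n : ℕ) := Fin (n + 4) → ℝ

def p1 (n : ℕ) : Fin (n + 4) := ⟨0, by omega⟩
def p2 (n : ℕ) : Fin (n + 4) := ⟨1, by omega⟩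
def ehat {n : ℕ} (i : Fin n) : Fin (n + 4) := ⟨i.1 + 2, by have := i.isLt; omega⟩
def q1 (n : ℕ) : Fin (n + 4) := ⟨n + 2, by omega⟩
def q2 (n : ℕ) : Fin (n + 4) := ⟨n + 3, by omega⟩

noncomputable section

variable {n N : ℕ}

/-- `u^î(x) = Σ_ĵ Σ_α (A_α)_{î-2,ĵ-2} x^ĵ (x^{n+3})^α`. -/
def u (A : Fin N → Matrix (Fin n) (Fin n) ℝ) (i : Fin n) (x : Pt n) : ℝ :=
  ∑ j : Fin n, ∑ α : Fin N, A α i j * x (ehat j) * x (q1 n) ^ (α.1 + 1)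

/-- `F(x) = Σ_î (x^î)²`. -/
def Fq (n : ℕ) (x : Pt n) : ℝ := ∑ i : Fin n, x (ehat i) ^ 2

/-- The Gram matrix `G(x)` of the metric. -/
def Gmet (A : Fin N → Matrix (Fin n) (Fin n) ℝ) (x : Pt n) :
    Matrix (Fin (n + 4)) (Fin (n + 4)) ℝ := fun a b =>
  (if (a = p1 n ∧ b = q1 n) ∨ (a = q1 n ∧ b = p1 n) then (1 : ℝ) else 0)
  + (if (a = p2 n ∧ b = q2 n) ∨ (a = q2 n ∧ b = p2 n) then (1 : ℝ) else 0)
  + (∑ i : Fin n, if a = ehat i ∧ b = ehat i then (1 : ℝ) else 0)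
  + (∑ i : Fin n, if (a = ehat i ∧ b = q2 n) ∨ (a = q2 n ∧ b = ehat i) then u A i x else 0)
  + (if (a = q1 n ∧ b = q1 n) ∨ (a = q2 n ∧ b = q2 n) then Fq n x else 0)

/-- Partial derivative `∂_b f` of a function on `ℝ^{n+4}`. -/
def pd (b : Fin (n + 4)) (f : Pt n → ℝ) (x : Pt n) : ℝ :=
  fderiv ℝ f x (Pi.single b 1)

/-- Christoffel symbols
`Γ^a_{bc} = ½ Σ_d G^{ad} (∂_b G_{dc} + ∂_c G_{bd} − ∂_d G_{bc})`. -/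
def Γchr (A : Fin N → Matrix (Fin n) (Fin n) ℝ) (a b c : Fin (n + 4)) (x : Pt n) : ℝ :=
  (1 / 2) * ∑ d : Fin (n + 4), (Gmet A x)⁻¹ a d *
    (pd b (fun y => Gmet A y d c) x + pd c (fun y => Gmet A y b d) x
      - pd d (fun y => Gmet A y b c) x)

/-- Curvature components
`R^a_{b,c,d} = ∂_c Γ^a_{db} − ∂_d Γ^a_{cb} + Σ_e (Γ^a_{ce} Γ^e_{db} − Γ^a_{de} Γ^e_{cb})`. -/
def Rcurv (A : Fin N → Matrix (Fin n) (Fin n) ℝ) (a b c d : Fin (n + 4)) (x : Pt n) : ℝ :=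
  pd c (Γchr A a d b) x - pd d (Γchr A a c b) x
  + ∑ e : Fin (n + 4), (Γchr A a c e x * Γchr A e d b x - Γchr A a d e x * Γchr A e c b x)

/-- Auxiliary recursion for iterated covariant derivatives of the curvature; the list of
differentiation indices is stored in *reverse* order (most recent derivative first). -/
def covRAux (A : Fin N → Matrix (Fin n) (Fin n) ℝ) :
    Fin (n + 4) → Fin (n + 4) → Fin (n + 4) → Fin (n + 4) → List (Fin (n + 4)) → Pt n → ℝ
  | a, b, c, d, [], x => Rcurv A a b c d x
  | a, b, c, d, f :: fs, x =>
      pd f (covRAux A a b c d fs) x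
      + ∑ l : Fin (n + 4), Γchr A a f l x * covRAux A l b c d fs x
      - ∑ l : Fin (n + 4), Γchr A l f b x * covRAux A a l c d fs x
      - ∑ l : Fin (n + 4), Γchr A l f c x * covRAux A a b l d fs x
      - ∑ l : Fin (n + 4), Γchr A l f d x * covRAux A a b c l fs x
      - ∑ s : Fin fs.length, ∑ l : Fin (n + 4),
          Γchr A l f (fs.get s) x * covRAux A a b c d (fs.set s l) x
  termination_by a b c d fs => fs.length
  decreasing_by all_goals simp [List.length_set]

/-- `covR A a b c d [f_1, …, f_r] x` is the component `R^a_{b,c,d;f_1;…;f_r}(x)` of the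
`r`-th covariant derivative of the curvature tensor (indices in natural order). -/
def covR (A : Fin N → Matrix (Fin n) (Fin n) ℝ) (a b c d : Fin (n + 4))
    (fs : List (Fin (n + 4))) (x : Pt n) : ℝ :=
  covRAux A a b c d fs.reverse x

/-! ### The coordinate indices -/

@[simp] lemma ehat_inj (i j : Fin n) : (ehat i = ehat j) ↔ i = j := by
  simp [ehat, Fin.ext_iff]
@[simp] lemma ehat_ne_p1 (i : Fin n) : ehat i ≠ p1 n := by simp [ehat, p1]
@[simp] lemma ehat_ne_p2 (i : Fin n) : ehat i ≠ p2 n := by simp [ehat, p2]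
@[simp] lemma ehat_ne_q1 (i : Fin n) : ehat i ≠ q1 n := by simp [ehat, q1]; omega
@[simp] lemma ehat_ne_q2 (i : Fin n) : ehat i ≠ q2 n := by simp [ehat, q2]; omega
@[simp] lemma p1_ne_ehat (i : Fin n) : p1 n ≠ ehat i := (ehat_ne_p1 i).symm
@[simp] lemma p2_ne_ehat (i : Fin n) : p2 n ≠ ehat i := (ehat_ne_p2 i).symm
@[simp] lemma q1_ne_ehat (i : Fin n) : q1 n ≠ ehat i := (ehat_ne_q1 i).symm
@[simp] lemma q2_ne_ehat (i : Fin n) : q2 n ≠ ehat i := (ehat_ne_q2 i).symm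
@[simp] lemma p1_ne_p2 : p1 n ≠ p2 n := by simp [p1, p2]
@[simp] lemma p2_ne_p1 : p2 n ≠ p1 n := by simp [p1, p2]
@[simp] lemma p1_ne_q1 : p1 n ≠ q1 n := by simp [p1, q1]
@[simp] lemma q1_ne_p1 : q1 n ≠ p1 n := by simp [p1, q1]
@[simp] lemma p1_ne_q2 : p1 n ≠ q2 n := by simp [p1, q2]
@[simp] lemma q2_ne_p1 : q2 n ≠ p1 n := by simp [p1, q2]
@[simp] lemma p2_ne_q1 : p2 n ≠ q1 n := by simp [p2, q1]
@[simp] lemma q1_ne_p2 : q1 n ≠ p2 n := by simp [p2, q1]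
@[simp] lemma p2_ne_q2 : p2 n ≠ q2 n := by simp [p2, q2]
@[simp] lemma q2_ne_p2 : q2 n ≠ p2 n := by simp [p2, q2]
@[simp] lemma q1_ne_q2 : q1 n ≠ q2 n := by simp [q1, q2]
@[simp] lemma q2_ne_q1 : q2 n ≠ q1 n := by simp [q1, q2]

lemma index_cases (e : Fin (n + 4)) :
    e = p1 n ∨ e = p2 n ∨ (∃ i : Fin n, e = ehat i) ∨ e = q1 n ∨ e = q2 n := by
  by_cases h0 : e.1 = 0
  · left; ext; simp [p1, h0]
  by_cases h1 : e.1 = 1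
  · right; left; ext; simp [p2, h1]
  by_cases h2 : e.1 = n + 2
  · right; right; right; left; ext; simp [q1, h2]
  by_cases h3 : e.1 = n + 3
  · right; right; right; right; ext; simp [q2, h3]
  · right; right; left
    have := e.2
    exact ⟨⟨e.1 - 2, by omega⟩, by ext; simp [ehat]; omega⟩

lemma sum_split (g : Fin (n + 4) → ℝ) :
    ∑ e, g e = g (p1 n) + g (p2 n) + (∑ i : Fin n, g (ehat i)) + g (q1 n) + g (q2 n) := by
  rw [Fin.sum_univ_castSucc, Fin.sum_univ_castSucc, Fin.sum_univ_succ, Fin.sum_univ_succ]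
  simp only [← add_assoc]
  rfl

lemma sum_eq_hat {g : Fin (n + 4) → ℝ} (h1 : g (p1 n) = 0) (h2 : g (p2 n) = 0)
    (h3 : g (q1 n) = 0) (h4 : g (q2 n) = 0) : ∑ e, g e = ∑ i : Fin n, g (ehat i) := by
  rw [sum_split, h1, h2, h3, h4]; ring

/-- `c` is one of the indices `1, 2` of the parallel null directions. -/
def IsP (c : Fin (n + 4)) : Prop := c = p1 n ∨ c = p2 n

/-- `c` is one of the indices `n+3, n+4`. -/
def IsQ (c : Fin (n + 4)) : Prop := c = q1 n ∨ c = q2 n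

lemma ne_q2_of_not_isQ {f : Fin (n + 4)} (hf : ¬ IsQ f) : f ≠ q2 n := fun h => hf (Or.inr h)

lemma ne_q1_of_not_isQ {f : Fin (n + 4)} (hf : ¬ IsQ f) : f ≠ q1 n := fun h => hf (Or.inl h)

/-! ### Partial derivatives -/

@[simp] lemma pd_const (b : Fin (n + 4)) (c : ℝ) (x : Pt n) : pd b (fun _ => c) x = 0 := by
  simp [pd]

lemma pd_eq_lineDeriv {b : Fin (n + 4)} {f : Pt n → ℝ} {x : Pt n}
    (h : DifferentiableAt ℝ f x) : pd b f x = lineDeriv ℝ f x (Pi.single b 1) :=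
  h.lineDeriv_eq_fderiv.symm

lemma pd_eq_zero_of_invariant {b : Fin (n + 4)} {f : Pt n → ℝ} {x : Pt n}
    (h : ∀ s : ℝ, f (x + s • Pi.single b 1) = f x) : pd b f x = 0 := by
  by_cases hd : DifferentiableAt ℝ f x
  · simp [pd_eq_lineDeriv hd, lineDeriv, h]
  · simp [pd, fderiv_zero_of_not_differentiableAt hd]

/-- `g` is a function of the coordinate `x^{n+3}` alone. -/
def OnlyT (g : Pt n → ℝ) : Prop := ∀ x y : Pt n, x (q1 n) = y (q1 n) → g x = g y

lemma OnlyT.pd_eq_zero {g : Pt n → ℝ} (hg : OnlyT g) {f : Fin (n + 4)} (hf : f ≠ q1 n)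
    (x : Pt n) : pd f g x = 0 :=
  pd_eq_zero_of_invariant fun s => hg _ _ (by simp [hf.symm])

lemma OnlyT.pd {g : Pt n → ℝ} (hg : OnlyT g) (f : Fin (n + 4)) : OnlyT (pd f g) := by
  intro x y hxy
  -- `g` is invariant under the translation by `y - x`, which fixes the coordinate `x^{n+3}`.
  have h : (fun z => g (z + (y - x))) = g := by
    funext z
    exact hg _ _ (by simp [hxy])
  have h2 := fderiv_comp_add_right (𝕜 := ℝ) (f := g) (x := x) (y - x)
  rw [h] at h2
  unfold HolPaper.pd
  rw [h2]
  simp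

/-! ### The metric and its inverse -/

lemma Gmet_comm (A : Fin N → Matrix (Fin n) (Fin n) ℝ) (x : Pt n) (a b : Fin (n + 4)) :
    Gmet A x a b = Gmet A x b a := by
  simp only [Gmet, and_comm, or_comm]

lemma Gmet_p1 (A : Fin N → Matrix (Fin n) (Fin n) ℝ) (x : Pt n) (b : Fin (n + 4)) :
    Gmet A x (p1 n) b = if b = q1 n then 1 else 0 := by
  simp [Gmet]

lemma Gmet_p2 (A : Fin N → Matrix (Fin n) (Fin n) ℝ) (x : Pt n) (b : Fin (n + 4)) :
    Gmet A x (p2 n) b = if b = q2 n then 1 else 0 := by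
  simp [Gmet]

lemma Gmet_hat (A : Fin N → Matrix (Fin n) (Fin n) ℝ) (x : Pt n) (i : Fin n)
    (b : Fin (n + 4)) :
    Gmet A x (ehat i) b = (if b = ehat i then 1 else 0) + if b = q2 n then u A i x else 0 := by
  simp [Gmet, ite_and]

lemma Gmet_det_ne_zero (A : Fin N → Matrix (Fin n) (Fin n) ℝ) (x : Pt n) :
    (Gmet A x).det ≠ 0 := by
  intro h
  obtain ⟨v, hv, hGv⟩ := Matrix.exists_mulVec_eq_zero_iff.2 h
  have row : ∀ a, ∑ b, Gmet A x a b * v b = 0 := fun a => congrFun hGv a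
  have h1 : v (q1 n) = 0 := by simpa [Gmet_p1] using row (p1 n)
  have h2 : v (q2 n) = 0 := by simpa [Gmet_p2] using row (p2 n)
  have h3 : ∀ i, v (ehat i) = 0 := fun i => by
    simpa [Gmet_hat, add_mul, Finset.sum_add_distrib, h2] using row (ehat i)
  have h4 : v (p1 n) = 0 := by
    have := row (q1 n)
    rw [sum_split] at this
    simpa [h1, h2, h3, Gmet_comm A x (q1 n) (p1 n), Gmet_comm A x (q1 n) (p2 n), Gmet_p1,
      Gmet_p2] using this
  have h5 : v (p2 n) = 0 := by
    have := row (q2 n)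
    rw [sum_split] at this
    simpa [h1, h2, h3, Gmet_comm A x (q2 n) (p1 n), Gmet_comm A x (q2 n) (p2 n), Gmet_p1,
      Gmet_p2] using this
  apply hv
  funext e
  rcases index_cases e with rfl | rfl | ⟨i, rfl⟩ | rfl | rfl <;> simp [*]

/-- A row vector `w` with `w G = e_a` is the row `a` of `G⁻¹`. -/
lemma Gmet_inv_row (A : Fin N → Matrix (Fin n) (Fin n) ℝ) (x : Pt n) (w : Fin (n + 4) → ℝ)
    (a : Fin (n + 4)) (h : w ᵥ* Gmet A x = Pi.single a 1) (d : Fin (n + 4)) :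
    (Gmet A x)⁻¹ a d = w d := by
  have hu : IsUnit (Gmet A x).det := (Gmet_det_ne_zero A x).isUnit
  have h2 : (w ᵥ* Gmet A x) ᵥ* (Gmet A x)⁻¹ = w := by
    rw [Matrix.vecMul_vecMul, Matrix.mul_nonsing_inv _ hu, Matrix.vecMul_one]
  rw [h] at h2
  rw [← h2]
  simp

lemma Gmet_inv_q1 (A : Fin N → Matrix (Fin n) (Fin n) ℝ) (x : Pt n) (d : Fin (n + 4)) :
    (Gmet A x)⁻¹ (q1 n) d = if d = p1 n then 1 else 0 := by
  rw [Gmet_inv_row A x (Pi.single (p1 n) 1)]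
  · simp [Pi.single_apply]
  · funext b
    simp [Gmet_p1, Pi.single_apply]

lemma Gmet_inv_q2 (A : Fin N → Matrix (Fin n) (Fin n) ℝ) (x : Pt n) (d : Fin (n + 4)) :
    (Gmet A x)⁻¹ (q2 n) d = if d = p2 n then 1 else 0 := by
  rw [Gmet_inv_row A x (Pi.single (p2 n) 1)]
  · simp [Pi.single_apply]
  · funext b
    simp [Gmet_p2, Pi.single_apply]

lemma Gmet_inv_hat (A : Fin N → Matrix (Fin n) (Fin n) ℝ) (x : Pt n) (i : Fin n)
    (d : Fin (n + 4)) :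
    (Gmet A x)⁻¹ (ehat i) d
      = (if d = ehat i then 1 else 0) - (if d = p2 n then u A i x else 0) := by
  rw [Gmet_inv_row A x (Pi.single (ehat i) 1 - u A i x • Pi.single (p2 n) 1)]
  · simp [Pi.single_apply]
  · funext b
    rw [Matrix.sub_vecMul, Matrix.smul_vecMul]
    simp [Gmet_p2, Gmet_hat, Pi.single_apply]

/-! ### The Christoffel symbols -/

lemma pd_Gmet_p_left (A : Fin N → Matrix (Fin n) (Fin n) ℝ) {p : Fin (n + 4)} (hp : IsP p)
    (b c : Fin (n + 4)) (x : Pt n) : pd c (fun y => Gmet A y p b) x = 0 := by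
  rcases hp with rfl | rfl
  · simp [Gmet_p1]
  · simp [Gmet_p2]

lemma pd_Gmet_p_right (A : Fin N → Matrix (Fin n) (Fin n) ℝ) {p : Fin (n + 4)} (hp : IsP p)
    (b c : Fin (n + 4)) (x : Pt n) : pd c (fun y => Gmet A y b p) x = 0 := by
  simp only [Gmet_comm A _ b p, pd_Gmet_p_left A hp]

lemma pd_p_Gmet (A : Fin N → Matrix (Fin n) (Fin n) ℝ) {p : Fin (n + 4)} (hp : IsP p)
    (b c : Fin (n + 4)) (x : Pt n) : pd p (fun y => Gmet A y b c) x = 0 := by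
  apply pd_eq_zero_of_invariant
  intro s
  rcases hp with rfl | rfl <;> simp [Gmet, u, Fq]

lemma Γchr_p (A : Fin N → Matrix (Fin n) (Fin n) ℝ) (a b : Fin (n + 4)) {p : Fin (n + 4)}
    (hp : IsP p) : Γchr A a b p = fun _ => 0 := by
  funext x
  simp [Γchr, pd_Gmet_p_right A hp, pd_p_Gmet A hp]

lemma Γchr_q (A : Fin N → Matrix (Fin n) (Fin n) ℝ) {q : Fin (n + 4)} (hq : IsQ q)
    (b c : Fin (n + 4)) : Γchr A q b c = fun _ => 0 := by
  funext x
  rcases hq with rfl | rfl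
  · simp [Γchr, Gmet_inv_q1, pd_Gmet_p_left A (Or.inl rfl : IsP (p1 n)),
      pd_Gmet_p_right A (Or.inl rfl : IsP (p1 n)), pd_p_Gmet A (Or.inl rfl : IsP (p1 n))]
  · simp [Γchr, Gmet_inv_q2, pd_Gmet_p_left A (Or.inr rfl : IsP (p2 n)),
      pd_Gmet_p_right A (Or.inr rfl : IsP (p2 n)), pd_p_Gmet A (Or.inr rfl : IsP (p2 n))]

lemma Γchr_hat_eq (A : Fin N → Matrix (Fin n) (Fin n) ℝ) (i j : Fin n) (f : Fin (n + 4))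
    (x : Pt n) :
    Γchr A (ehat i) f (ehat j) x = (1 / 2) *
      (pd (ehat j) (fun y => Gmet A y f (ehat i)) x
        - pd (ehat i) (fun y => Gmet A y f (ehat j)) x) := by
  have hp : IsP (p2 n) := Or.inr rfl
  simp only [Γchr, Gmet_inv_hat, sub_mul, Finset.sum_sub_distrib, ite_mul, one_mul, zero_mul,
    Finset.sum_ite_eq', Finset.mem_univ, if_true, pd_Gmet_p_left A hp,
    pd_Gmet_p_right A hp, pd_p_Gmet A hp]
  simp [Gmet_hat]

lemma Γchr_hat_of_ne (A : Fin N → Matrix (Fin n) (Fin n) ℝ) (i j : Fin n) {f : Fin (n + 4)}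
    (hf : f ≠ q2 n) : Γchr A (ehat i) f (ehat j) = fun _ => 0 := by
  funext x
  rw [Γchr_hat_eq]
  simp [Gmet_comm A _ f, Gmet_hat, hf]

lemma pd_u (A : Fin N → Matrix (Fin n) (Fin n) ℝ) (i j : Fin n) (x : Pt n) :
    pd (ehat j) (u A i) x = ∑ α : Fin N, A α i j * x (q1 n) ^ (α.1 + 1) := by
  have hd : DifferentiableAt ℝ (u A i) x := by
    unfold u
    fun_prop
  have h : ∀ s : ℝ, u A i (x + s • Pi.single (ehat j) 1)
      = u A i x + s * ∑ α : Fin N, A α i j * x (q1 n) ^ (α.1 + 1) := by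
    intro s
    simp only [u, Pi.add_apply, Pi.smul_apply, Pi.single_apply, ehat_inj, q1_ne_ehat, if_false,
      smul_eq_mul, mul_zero, add_zero, mul_add, add_mul, Finset.sum_add_distrib]
    congr 1
    rw [Finset.sum_eq_single j]
    · rw [Finset.mul_sum]
      exact Finset.sum_congr rfl fun α _ => by simp; ring
    · intro k _ hk
      simp [hk]
    · simp
  rw [pd_eq_lineDeriv hd, lineDeriv]
  simp [h]

/-- `Γ^î_{fĵ}` is a function of `x^{n+3}` alone. -/
lemma Γchr_hat (A : Fin N → Matrix (Fin n) (Fin n) ℝ) (i j : Fin n) (f : Fin (n + 4)) :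
    OnlyT (Γchr A (ehat i) f (ehat j)) := by
  intro x y hxy
  by_cases hf : f = q2 n
  · subst hf
    have h : ∀ (k l : Fin n) (z : Pt n), pd (ehat l) (fun y => Gmet A y (q2 n) (ehat k)) z
        = ∑ α : Fin N, A α k l * z (q1 n) ^ (α.1 + 1) := by
      intro k l z
      simp only [Gmet_comm A _ (q2 n), Gmet_hat]
      simpa using pd_u A k l z
    rw [Γchr_hat_eq, Γchr_hat_eq, h, h, h, h, hxy]
  · simp [Γchr_hat_of_ne A i j hf]

/-! ### The curvature and its covariant derivatives -/

/-- In the quadratic terms of `R^î_{ĵ,c,d}` only the hatted values of the summation index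
contribute. -/
lemma Rcurv_hat (A : Fin N → Matrix (Fin n) (Fin n) ℝ) (i j : Fin n) (c d : Fin (n + 4))
    (x : Pt n) :
    Rcurv A (ehat i) (ehat j) c d x
      = pd c (Γchr A (ehat i) d (ehat j)) x - pd d (Γchr A (ehat i) c (ehat j)) x
        + ∑ l : Fin n, (Γchr A (ehat i) c (ehat l) x * Γchr A (ehat l) d (ehat j) x
          - Γchr A (ehat i) d (ehat l) x * Γchr A (ehat l) c (ehat j) x) := by
  rw [Rcurv, sum_eq_hat]
  · simp [Γchr_p A _ _ (Or.inl rfl : IsP (p1 n))]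
  · simp [Γchr_p A _ _ (Or.inr rfl : IsP (p2 n))]
  · simp [Γchr_q A (Or.inl rfl : IsQ (q1 n))]
  · simp [Γchr_q A (Or.inr rfl : IsQ (q2 n))]

lemma covRAux_q (A : Fin N → Matrix (Fin n) (Fin n) ℝ) {q : Fin (n + 4)} (hq : IsQ q)
    (b c d : Fin (n + 4)) (fs : List (Fin (n + 4))) : covRAux A q b c d fs = fun _ => 0 := by
  induction hm : fs.length generalizing b c d fs with
  | zero =>
    obtain rfl := List.length_eq_zero_iff.1 hm
    funext x
    simp [covRAux, Rcurv, Γchr_q A hq]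
  | succ m ih =>
    obtain ⟨f, fs, rfl⟩ := List.exists_cons_of_length_eq_add_one hm
    have hm' : fs.length = m := by simpa using hm
    funext x
    have h : ∀ s l b c d, covRAux A q b c d (fs.set s l) = fun _ => 0 :=
      fun s l b c d => ih _ _ _ _ (by simpa using hm')
    simp [covRAux, Γchr_q A hq, ih _ _ _ fs hm', h]

lemma covRAux_p (A : Fin N → Matrix (Fin n) (Fin n) ℝ) {p : Fin (n + 4)} (hp : IsP p)
    (a c d : Fin (n + 4)) (fs : List (Fin (n + 4))) : covRAux A a p c d fs = fun _ => 0 := by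
  induction hm : fs.length generalizing a c d fs with
  | zero =>
    obtain rfl := List.length_eq_zero_iff.1 hm
    funext x
    simp [covRAux, Rcurv, Γchr_p A _ _ hp]
  | succ m ih =>
    obtain ⟨f, fs, rfl⟩ := List.exists_cons_of_length_eq_add_one hm
    have hm' : fs.length = m := by simpa using hm
    funext x
    have h : ∀ s l a c d, covRAux A a p c d (fs.set s l) = fun _ => 0 :=
      fun s l a c d => ih _ _ _ _ (by simpa using hm')
    simp [covRAux, Γchr_p A _ _ hp, ih _ _ _ fs hm', h]

/-- The reduced recursion for `T^î_{ĵ,c,d;…;f}`, given that the components of the preceding order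
vanish as soon as one of the indices `c, d, f_s` is not of type `q`. -/
lemma covRAux_cons_of_vanish (A : Fin N → Matrix (Fin n) (Fin n) ℝ) (i j : Fin n)
    (c d f : Fin (n + 4)) (fs : List (Fin (n + 4)))
    (hv : ∀ (c d : Fin (n + 4)) (gs : List (Fin (n + 4))), gs.length = fs.length →
      (∃ e ∈ c :: d :: gs, ¬ IsQ e) → covRAux A (ehat i) (ehat j) c d gs = fun _ => 0)
    (x : Pt n) :
    covRAux A (ehat i) (ehat j) c d (f :: fs) x
      = pd f (covRAux A (ehat i) (ehat j) c d fs) x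
        + ∑ l : Fin n, (Γchr A (ehat i) f (ehat l) x * covRAux A (ehat l) (ehat j) c d fs x
          - Γchr A (ehat l) f (ehat j) x * covRAux A (ehat i) (ehat l) c d fs x) := by
  have hc : ∑ l, Γchr A l f c x * covRAux A (ehat i) (ehat j) l d fs x = 0 := by
    refine Finset.sum_eq_zero fun l _ => ?_
    by_cases hl : IsQ l
    · simp [Γchr_q A hl]
    · simp [hv l d fs rfl ⟨l, by simp, hl⟩]
  have hd : ∑ l, Γchr A l f d x * covRAux A (ehat i) (ehat j) c l fs x = 0 := by
    refine Finset.sum_eq_zero fun l _ => ?_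
    by_cases hl : IsQ l
    · simp [Γchr_q A hl]
    · simp [hv c l fs rfl ⟨l, by simp, hl⟩]
  have hs : ∑ s : Fin fs.length, ∑ l, Γchr A l f (fs.get s) x
      * covRAux A (ehat i) (ehat j) c d (fs.set s l) x = 0 := by
    refine Finset.sum_eq_zero fun s _ => Finset.sum_eq_zero fun l _ => ?_
    by_cases hl : IsQ l
    · simp [Γchr_q A hl]
    · have hmem : l ∈ fs.set s l := List.mem_set s.2 l
      simp [hv c d (fs.set s l) (by simp) ⟨l, by simp [hmem], hl⟩]
  have h1 : ∑ l, Γchr A (ehat i) f l x * covRAux A l (ehat j) c d fs x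
      = ∑ l : Fin n, Γchr A (ehat i) f (ehat l) x * covRAux A (ehat l) (ehat j) c d fs x := by
    apply sum_eq_hat
    · simp [Γchr_p A _ _ (Or.inl rfl : IsP (p1 n))]
    · simp [Γchr_p A _ _ (Or.inr rfl : IsP (p2 n))]
    · simp [covRAux_q A (Or.inl rfl : IsQ (q1 n))]
    · simp [covRAux_q A (Or.inr rfl : IsQ (q2 n))]
  have h2 : ∑ l, Γchr A l f (ehat j) x * covRAux A (ehat i) l c d fs x
      = ∑ l : Fin n, Γchr A (ehat l) f (ehat j) x * covRAux A (ehat i) (ehat l) c d fs x := by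
    apply sum_eq_hat
    · simp [covRAux_p A (Or.inl rfl : IsP (p1 n))]
    · simp [covRAux_p A (Or.inr rfl : IsP (p2 n))]
    · simp [Γchr_q A (Or.inl rfl : IsQ (q1 n))]
    · simp [Γchr_q A (Or.inr rfl : IsQ (q2 n))]
  rw [covRAux, hc, hd, hs, h1, h2, Finset.sum_sub_distrib]
  ring

/-- The components `T^î_{ĵ,c,d;f_1;…}` are functions of `x^{n+3}` alone and vanish unless
`c, d, f_1, …` all lie in `{n+3, n+4}`. -/
lemma covRAux_block (A : Fin N → Matrix (Fin n) (Fin n) ℝ) (i j : Fin n) (c d : Fin (n + 4))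
    (fs : List (Fin (n + 4))) :
    OnlyT (covRAux A (ehat i) (ehat j) c d fs) ∧
      ((∃ e ∈ c :: d :: fs, ¬ IsQ e) → covRAux A (ehat i) (ehat j) c d fs = fun _ => 0) := by
  induction hm : fs.length generalizing i j c d fs with
  | zero =>
    obtain rfl := List.length_eq_zero_iff.1 hm
    have hR : covRAux A (ehat i) (ehat j) c d [] = Rcurv A (ehat i) (ehat j) c d := by
      funext x
      simp [covRAux]
    rw [hR]
    refine ⟨fun x y hxy => ?_, ?_⟩
    · rw [Rcurv_hat, Rcurv_hat, (Γchr_hat A i j d).pd c x y hxy,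
        (Γchr_hat A i j c).pd d x y hxy]
      congr 1
      refine Finset.sum_congr rfl fun l _ => ?_
      rw [Γchr_hat A i l c x y hxy, Γchr_hat A l j d x y hxy, Γchr_hat A i l d x y hxy,
        Γchr_hat A l j c x y hxy]
    · rintro ⟨e, he, hQ⟩
      funext x
      rw [Rcurv_hat]
      simp only [List.mem_cons, List.not_mem_nil, or_false] at he
      rcases he with rfl | rfl
      · simp [(Γchr_hat A i j d).pd_eq_zero (ne_q1_of_not_isQ hQ),
          Γchr_hat_of_ne A _ _ (ne_q2_of_not_isQ hQ)]
      · simp [(Γchr_hat A i j c).pd_eq_zero (ne_q1_of_not_isQ hQ),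
          Γchr_hat_of_ne A _ _ (ne_q2_of_not_isQ hQ)]
  | succ m ih =>
    obtain ⟨f, fs, rfl⟩ := List.exists_cons_of_length_eq_add_one hm
    have hm' : fs.length = m := by simpa using hm
    have step := covRAux_cons_of_vanish A i j c d f fs
      fun c d gs hgs => (ih i j c d gs (hgs.trans hm')).2
    have hT : ∀ i j, OnlyT (covRAux A (ehat i) (ehat j) c d fs) :=
      fun i j => (ih i j c d fs hm').1
    refine ⟨fun x y hxy => ?_, ?_⟩
    · rw [step, step, (hT i j).pd f x y hxy]
      congr 1
      refine Finset.sum_congr rfl fun l _ => ?_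
      rw [Γchr_hat A i l f x y hxy, Γchr_hat A l j f x y hxy, hT l j x y hxy, hT i l x y hxy]
    · rintro ⟨e, he, hQ⟩
      funext x
      rw [step]
      by_cases hef : e = f
      · subst hef
        simp [(hT i j).pd_eq_zero (ne_q1_of_not_isQ hQ),
          Γchr_hat_of_ne A _ _ (ne_q2_of_not_isQ hQ)]
      · have he' : ∃ e ∈ c :: d :: fs, ¬ IsQ e :=
          ⟨e, by simp only [List.mem_cons] at he ⊢; tauto, hQ⟩
        have hz : ∀ i j, covRAux A (ehat i) (ehat j) c d fs = fun _ => 0 :=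
          fun i j => (ih i j c d fs hm').2 he'
        simp [hz]

lemma covRAux_cons_block (A : Fin N → Matrix (Fin n) (Fin n) ℝ) (i j : Fin n)
    (c d f : Fin (n + 4)) (fs : List (Fin (n + 4))) (x : Pt n) :
    covRAux A (ehat i) (ehat j) c d (f :: fs) x
      = pd f (covRAux A (ehat i) (ehat j) c d fs) x
        + ∑ l : Fin n, (Γchr A (ehat i) f (ehat l) x * covRAux A (ehat l) (ehat j) c d fs x
          - Γchr A (ehat l) f (ehat j) x * covRAux A (ehat i) (ehat l) c d fs x) :=
  covRAux_cons_of_vanish A i j c d f fs (fun c d gs _ => (covRAux_block A i j c d gs).2) x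

/-- `R^î_{ĵ,n+3,n+4;f_1;…;f_{r−1};n+3} = ∂_{n+3} R^î_{ĵ,n+3,n+4;f_1;…;f_{r−1}}` and
`R^î_{ĵ,n+3,n+4;f_1;…;f_{r−1};n+4}
  = Σ_l̂ (Γ^î_{n+4,l̂} R^l̂_{ĵ,n+3,n+4;f_1;…;f_{r−1}} − Γ^l̂_{n+4,ĵ} R^î_{l̂,n+3,n+4;f_1;…;f_{r−1}})`. -/
theorem statement16 (n N : ℕ) (hn : 1 ≤ n) (hN : 1 ≤ N)
    (A : Fin N → Matrix (Fin n) (Fin n) ℝ) (hA : ∀ α, (A α)ᵀ = -A α) :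
    ∀ (fs : List (Fin (n + 4))) (i j : Fin n) (x : Pt n),
      covR A (ehat i) (ehat j) (q1 n) (q2 n) (fs ++ [q1 n]) x
        = pd (q1 n) (covR A (ehat i) (ehat j) (q1 n) (q2 n) fs) x ∧
      covR A (ehat i) (ehat j) (q1 n) (q2 n) (fs ++ [q2 n]) x
        = ∑ l : Fin n,
            (Γchr A (ehat i) (q2 n) (ehat l) x * covR A (ehat l) (ehat j) (q1 n) (q2 n) fs x
              - Γchr A (ehat l) (q2 n) (ehat j) x
                * covR A (ehat i) (ehat l) (q1 n) (q2 n) fs x) := by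
  intro fs i j x
  have hrev : ∀ (a b : Fin (n + 4)),
      covR A a b (q1 n) (q2 n) fs = covRAux A a b (q1 n) (q2 n) fs.reverse := fun _ _ => rfl
  simp only [hrev]
  constructor
  · rw [covR, List.reverse_append, List.reverse_singleton, List.singleton_append,
      covRAux_cons_block]
    simp [Γchr_hat_of_ne A _ _ q1_ne_q2]
  · rw [covR, List.reverse_append, List.reverse_singleton, List.singleton_append,
      covRAux_cons_block, (covRAux_block A i j _ _ _).1.pd_eq_zero q2_ne_q1, zero_add]

end
end HolPaper
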